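/- Let f1, h1 : ℝ → ℝ be smooth, let F1(y) = ∫_0^y f1(s) ds and H1(y) = ∫_0^y h1(s) ds, and let f0, h0 ∈ ℝ. Let u : ℝ² → ℝ be a smooth function of (t,x) with u(t,x) > |u_x(t,x)| > 0 at every point, set m = u − u_xx, and suppose that at every point m_t + f(u,u_x) m + ∂_x( g(u,u_x) m ) = 0, where f(u,u_x) = u_x f1(u² − u_x²) + f0 u/(u² − u_x²) and g(u,u_x) = u f1(u² − u_x²) + h1(u² − u_x²) + (f0 u² + h0 u)/( u_x (u² − u_x²) ). Then both of the following local conservation laws hold at every point: (i) ∂_t m + ∂_x[ g(u,u_x) m + (1/2) F1(u² − u_x²) + (1/2) f0 log( (u − u_x)/(u + u_x) ) + f0 x ] = 0 (momentum), and (ii) ∂_t( u² + u_x² ) + ∂_x[ 2 u g(u,u_x) m − 2 u u_tx − H1(u² − u_x²) − h0 log( (u − u_x)/(u + u_x) ) − 2 h0 x ] = 0 (H¹ density). -/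

import Mathlib

open Real

noncomputable section

/-- Partial derivative in the first (time) variable. -/
def pt (f : ℝ → ℝ → ℝ) (t x : ℝ) : ℝ := deriv (fun s => f s x) t

/-- Partial derivative in the second (space) variable. -/
def px (f : ℝ → ℝ → ℝ) (t x : ℝ) : ℝ := deriv (fun y => f t y) x

/-- The momentum variable `m = u - u_xx`. -/
def mf (u : ℝ → ℝ → ℝ) (t x : ℝ) : ℝ := u t x - px (px u) t x

/-! Write `A = u² - u_x²` and `L = log ((u - u_x) / (u + u_x))`. Then `A_x = 2 u_x m` and
`L_x = 2 u m / A - 2`, so both `f m` and `2 (u_x g - u f) m` are total `x`-derivatives of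
combinations of `F1 A`, `H1 A`, `L` and `x`. Together with
`2 u m_t = (u² + u_x²)_t - (2 u u_tx)_x` this shows that the two conservation laws are the
equation multiplied by `1` and by `2 u`, an identity that holds whether or not `u` is a
solution. -/

/-- The coefficient `f(v, p)` of the undifferentiated `m` in the multi-peakon equation, as a
function of the values `v` of `u` and `p` of `u_x`. -/
def stretchCoeff (f1 : ℝ → ℝ) (f0 v p : ℝ) : ℝ :=
  p * f1 (v ^ 2 - p ^ 2) + f0 * v / (v ^ 2 - p ^ 2)

/-- The velocity `g(v, p)` with which `m` is transported in the multi-peakon equation, as a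
function of the values `v` of `u` and `p` of `u_x`. -/
def transportVelocity (f1 h1 : ℝ → ℝ) (f0 h0 v p : ℝ) : ℝ :=
  v * f1 (v ^ 2 - p ^ 2) + h1 (v ^ 2 - p ^ 2)
    + (f0 * v ^ 2 + h0 * v) / (p * (v ^ 2 - p ^ 2))

/-- The flux `g(u, u_x) m` of the multi-peakon equation. -/
def transportFlux (f1 h1 : ℝ → ℝ) (f0 h0 : ℝ) (u : ℝ → ℝ → ℝ) (t x : ℝ) : ℝ :=
  transportVelocity f1 h1 f0 h0 (u t x) (px u t x) * mf u t x

/-- The left-hand side `m_t + f(u, u_x) m + (g(u, u_x) m)_x` of the multi-peakon equation. -/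
def multiPeakonOperator (f1 h1 : ℝ → ℝ) (f0 h0 : ℝ) (u : ℝ → ℝ → ℝ) (t x : ℝ) : ℝ :=
  pt (mf u) t x + stretchCoeff f1 f0 (u t x) (px u t x) * mf u t x
    + px (transportFlux f1 h1 f0 h0 u) t x

section PartialDerivatives

open scoped Topology

variable {f : ℝ → ℝ → ℝ} {n : WithTop ℕ∞} {t x : ℝ}

theorem hasDerivAt_snd_fderiv (hf : DifferentiableAt ℝ (Function.uncurry f) (t, x)) :
    HasDerivAt (fun y => f t y) (fderiv ℝ (Function.uncurry f) (t, x) (0, 1)) x :=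
  hf.hasFDerivAt.comp_hasDerivAt x ((hasDerivAt_const x t).prodMk (hasDerivAt_id x))

theorem hasDerivAt_fst_fderiv (hf : DifferentiableAt ℝ (Function.uncurry f) (t, x)) :
    HasDerivAt (fun s => f s x) (fderiv ℝ (Function.uncurry f) (t, x) (1, 0)) t :=
  hf.hasFDerivAt.comp_hasDerivAt (f := fun s => (s, x)) t
    ((hasDerivAt_id t).prodMk (hasDerivAt_const t x))

theorem hasDerivAt_px (hf : DifferentiableAt ℝ (Function.uncurry f) (t, x)) :
    HasDerivAt (fun y => f t y) (px f t x) x :=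
  (hasDerivAt_snd_fderiv hf).differentiableAt.hasDerivAt

theorem hasDerivAt_pt (hf : DifferentiableAt ℝ (Function.uncurry f) (t, x)) :
    HasDerivAt (fun s => f s x) (pt f t x) t :=
  (hasDerivAt_fst_fderiv hf).differentiableAt.hasDerivAt

theorem uncurry_px_eventuallyEq (hf : ContDiffAt ℝ 1 (Function.uncurry f) (t, x)) :
    Function.uncurry (px f) =ᶠ[𝓝 (t, x)] fun z => fderiv ℝ (Function.uncurry f) z (0, 1) := by
  filter_upwards [hf.eventually (by simp)] with z hz
  exact (hasDerivAt_snd_fderiv (hz.differentiableAt one_ne_zero)).deriv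

theorem uncurry_pt_eventuallyEq (hf : ContDiffAt ℝ 1 (Function.uncurry f) (t, x)) :
    Function.uncurry (pt f) =ᶠ[𝓝 (t, x)] fun z => fderiv ℝ (Function.uncurry f) z (1, 0) := by
  filter_upwards [hf.eventually (by simp)] with z hz
  exact (hasDerivAt_fst_fderiv (hz.differentiableAt one_ne_zero)).deriv

theorem contDiffAt_uncurry_px (hf : ContDiffAt ℝ (n + 1) (Function.uncurry f) (t, x)) :
    ContDiffAt ℝ n (Function.uncurry (px f)) (t, x) :=
  ((hf.fderiv_right le_rfl).clm_apply contDiffAt_const).congr_of_eventuallyEq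
    (uncurry_px_eventuallyEq (hf.of_le le_add_self))

theorem contDiffAt_uncurry_pt (hf : ContDiffAt ℝ (n + 1) (Function.uncurry f) (t, x)) :
    ContDiffAt ℝ n (Function.uncurry (pt f)) (t, x) :=
  ((hf.fderiv_right le_rfl).clm_apply contDiffAt_const).congr_of_eventuallyEq
    (uncurry_pt_eventuallyEq (hf.of_le le_add_self))

theorem pt_px_comm (hf : ContDiffAt ℝ 2 (Function.uncurry f) (t, x)) :
    pt (px f) t x = px (pt f) t x := by
  have hf1 : ContDiffAt ℝ 1 (Function.uncurry f) (t, x) := hf.of_le one_le_two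
  have hD : DifferentiableAt ℝ (fderiv ℝ (Function.uncurry f)) (t, x) :=
    (hf.fderiv_right (m := 1) (by norm_num)).differentiableAt one_ne_zero
  have hpx := (contDiffAt_uncurry_px (n := 1) hf).differentiableAt one_ne_zero
  have hpt := (contDiffAt_uncurry_pt (n := 1) hf).differentiableAt one_ne_zero
  have hsymm : IsSymmSndFDerivAt ℝ (Function.uncurry f) (t, x) :=
    hf.isSymmSndFDerivAt (by simp)
  calc pt (px f) t x
      = fderiv ℝ (fderiv ℝ (Function.uncurry f)) (t, x) (1, 0) (0, 1) := by
        rw [pt, (hasDerivAt_fst_fderiv hpx).deriv, (uncurry_px_eventuallyEq hf1).fderiv_eq,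
          fderiv_clm_apply hD (by fun_prop)]
        simp
    _ = fderiv ℝ (fderiv ℝ (Function.uncurry f)) (t, x) (0, 1) (1, 0) := hsymm (1, 0) (0, 1)
    _ = px (pt f) t x := by
        rw [px, (hasDerivAt_snd_fderiv hpt).deriv, (uncurry_pt_eventuallyEq hf1).fderiv_eq,
          fderiv_clm_apply hD (by fun_prop)]
        simp

end PartialDerivatives

section SpatialPotentials

variable {v p : ℝ → ℝ} {q x : ℝ}

theorem hasDerivAt_sq_sub_sq (hv : HasDerivAt v (p x) x) (hp : HasDerivAt p q x) :
    HasDerivAt (fun y => v y ^ 2 - p y ^ 2) (2 * p x * (v x - q)) x := by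
  refine ((hv.fun_pow 2).fun_sub (hp.fun_pow 2)).congr_deriv ?_
  push_cast
  ring

theorem hasDerivAt_log_sub_div_add (hv : HasDerivAt v (p x) x) (hp : HasDerivAt p q x)
    (hvp : v x ^ 2 - p x ^ 2 ≠ 0) :
    HasDerivAt (fun y => log ((v y - p y) / (v y + p y)))
      (2 * v x * (v x - q) / (v x ^ 2 - p x ^ 2) - 2) x := by
  have hfactor : v x ^ 2 - p x ^ 2 = (v x + p x) * (v x - p x) := sq_sub_sq _ _
  obtain ⟨hadd, hsub⟩ := mul_ne_zero_iff.mp (hfactor ▸ hvp)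
  refine (((hv.fun_sub hp).fun_div (hv.fun_add hp) hadd).log
    (div_ne_zero hsub hadd)).congr_deriv ?_
  rw [hfactor]
  field_simp
  ring

theorem hasDerivAt_momentumPotential {f1 F1 : ℝ → ℝ} (f0 : ℝ)
    (hF1 : HasDerivAt F1 (f1 (v x ^ 2 - p x ^ 2)) (v x ^ 2 - p x ^ 2))
    (hv : HasDerivAt v (p x) x) (hp : HasDerivAt p q x) (hvp : v x ^ 2 - p x ^ 2 ≠ 0) :
    HasDerivAt
      (fun y => 1 / 2 * F1 (v y ^ 2 - p y ^ 2)
        + 1 / 2 * f0 * log ((v y - p y) / (v y + p y)) + f0 * y)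
      (stretchCoeff f1 f0 (v x) (p x) * (v x - q)) x := by
  have hF := hF1.comp x (hasDerivAt_sq_sub_sq hv hp)
  have hlog := hasDerivAt_log_sub_div_add hv hp hvp
  refine (((hF.const_mul (1 / 2)).fun_add (hlog.const_mul (1 / 2 * f0))).fun_add
    ((hasDerivAt_id x).const_mul f0)).congr_deriv ?_
  rw [stretchCoeff]
  ring

theorem hasDerivAt_energyPotential {h1 H1 : ℝ → ℝ} (f1 : ℝ → ℝ) (f0 h0 : ℝ)
    (hH1 : HasDerivAt H1 (h1 (v x ^ 2 - p x ^ 2)) (v x ^ 2 - p x ^ 2))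
    (hv : HasDerivAt v (p x) x) (hp : HasDerivAt p q x)
    (hp0 : p x ≠ 0) (hvp : v x ^ 2 - p x ^ 2 ≠ 0) :
    HasDerivAt
      (fun y => H1 (v y ^ 2 - p y ^ 2) + h0 * log ((v y - p y) / (v y + p y)) + 2 * h0 * y)
      (2 * (p x * transportVelocity f1 h1 f0 h0 (v x) (p x)
        - v x * stretchCoeff f1 f0 (v x) (p x)) * (v x - q)) x := by
  have hH := hH1.comp x (hasDerivAt_sq_sub_sq hv hp)
  have hlog := hasDerivAt_log_sub_div_add hv hp hvp
  refine ((hH.fun_add (hlog.const_mul h0)).fun_add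
    ((hasDerivAt_id x).const_mul (2 * h0))).congr_deriv ?_
  rw [transportVelocity, stretchCoeff]
  field_simp
  ring

theorem differentiableAt_transportVelocity {f1 h1 : ℝ → ℝ} (f0 h0 : ℝ)
    (hf1 : DifferentiableAt ℝ f1 (v x ^ 2 - p x ^ 2))
    (hh1 : DifferentiableAt ℝ h1 (v x ^ 2 - p x ^ 2))
    (hv : DifferentiableAt ℝ v x) (hp : DifferentiableAt ℝ p x)
    (hp0 : p x ≠ 0) (hvp : v x ^ 2 - p x ^ 2 ≠ 0) :
    DifferentiableAt ℝ (fun y => transportVelocity f1 h1 f0 h0 (v y) (p y)) x := by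
  have hA : DifferentiableAt ℝ (fun y => v y ^ 2 - p y ^ 2) x := by fun_prop
  unfold transportVelocity
  exact ((hv.fun_mul (hf1.fun_comp' x hA)).fun_add (hh1.fun_comp' x hA)).fun_add
    (DifferentiableAt.fun_div (by fun_prop) (hp.fun_mul hA) (mul_ne_zero hp0 hvp))

end SpatialPotentials

section ConservationLaws

variable {f1 h1 F1 H1 : ℝ → ℝ} {u : ℝ → ℝ → ℝ} {t x : ℝ}

theorem contDiffAt_uncurry_mf {n : WithTop ℕ∞}
    (hu : ContDiffAt ℝ (n + 2) (Function.uncurry u) (t, x)) :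
    ContDiffAt ℝ n (Function.uncurry (mf u)) (t, x) := by
  have hu' : ContDiffAt ℝ (n + 1 + 1) (Function.uncurry u) (t, x) := by
    rwa [add_assoc, one_add_one_eq_two]
  exact (hu.of_le le_self_add).sub (contDiffAt_uncurry_px (contDiffAt_uncurry_px hu'))

theorem differentiableAt_transportFlux (f0 h0 : ℝ)
    (hf1 : DifferentiableAt ℝ f1 (u t x ^ 2 - px u t x ^ 2))
    (hh1 : DifferentiableAt ℝ h1 (u t x ^ 2 - px u t x ^ 2))
    (hu : ContDiffAt ℝ 3 (Function.uncurry u) (t, x))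
    (hux : px u t x ≠ 0) (hA : u t x ^ 2 - px u t x ^ 2 ≠ 0) :
    DifferentiableAt ℝ (fun y => transportFlux f1 h1 f0 h0 u t y) x := by
  have hu3 : ContDiffAt ℝ (1 + 2) (Function.uncurry u) (t, x) := by norm_num [hu]
  have hpx : ContDiffAt ℝ 2 (Function.uncurry (px u)) (t, x) :=
    contDiffAt_uncurry_px (by norm_num [hu])
  have hv := hasDerivAt_px (hu.differentiableAt three_ne_zero)
  have hp := hasDerivAt_px (hpx.differentiableAt two_ne_zero)
  have hm := hasDerivAt_px ((contDiffAt_uncurry_mf hu3).differentiableAt one_ne_zero)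
  exact (differentiableAt_transportVelocity f0 h0 hf1 hh1 hv.differentiableAt
    hp.differentiableAt hux hA).mul hm.differentiableAt

theorem hasDerivAt_two_mul_mul_pt_px (hu : ContDiffAt ℝ 3 (Function.uncurry u) (t, x)) :
    HasDerivAt (fun y => 2 * u t y * pt (px u) t y)
      (pt (fun t' x' => u t' x' ^ 2 + px u t' x' ^ 2) t x - 2 * u t x * pt (mf u) t x) x := by
  have hux : ContDiffAt ℝ 2 (Function.uncurry (px u)) (t, x) :=
    contDiffAt_uncurry_px (by norm_num [hu])
  have huxx : ContDiffAt ℝ 1 (Function.uncurry (px (px u))) (t, x) :=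
    contDiffAt_uncurry_px (by norm_num [hux])
  have hutx : ContDiffAt ℝ 1 (Function.uncurry (pt (px u))) (t, x) :=
    contDiffAt_uncurry_pt (by norm_num [hux])
  have hu' := hu.differentiableAt three_ne_zero
  have hux' := hux.differentiableAt two_ne_zero
  have hm_t : pt (mf u) t x = pt u t x - px (pt (px u)) t x := by
    rw [← pt_px_comm hux]
    exact ((hasDerivAt_pt hu').fun_sub
      (hasDerivAt_pt (huxx.differentiableAt one_ne_zero))).deriv
  have hdensity_t : pt (fun t' x' => u t' x' ^ 2 + px u t' x' ^ 2) t x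
      = 2 * u t x * pt u t x + 2 * px u t x * pt (px u) t x := by
    simpa [pt] using
      (((hasDerivAt_pt hu').fun_pow 2).fun_add ((hasDerivAt_pt hux').fun_pow 2)).deriv
  refine (((hasDerivAt_px hu').const_mul 2).fun_mul
    (hasDerivAt_px (hutx.differentiableAt one_ne_zero))).congr_deriv ?_
  rw [hm_t, hdensity_t]
  ring

theorem momentum_and_H1_conservation_general (f0 h0 : ℝ)
    (hf1 : DifferentiableAt ℝ f1 (u t x ^ 2 - px u t x ^ 2))
    (hh1 : DifferentiableAt ℝ h1 (u t x ^ 2 - px u t x ^ 2))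
    (hF1 : HasDerivAt F1 (f1 (u t x ^ 2 - px u t x ^ 2)) (u t x ^ 2 - px u t x ^ 2))
    (hH1 : HasDerivAt H1 (h1 (u t x ^ 2 - px u t x ^ 2)) (u t x ^ 2 - px u t x ^ 2))
    (hu : ContDiffAt ℝ 3 (Function.uncurry u) (t, x))
    (hux : px u t x ≠ 0) (hlt : |px u t x| < |u t x|) :
    pt (mf u) t x
        + px (fun t' x' => transportFlux f1 h1 f0 h0 u t' x'
            + 1 / 2 * F1 (u t' x' ^ 2 - px u t' x' ^ 2)
            + 1 / 2 * f0 * log ((u t' x' - px u t' x') / (u t' x' + px u t' x'))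
            + f0 * x') t x
      = multiPeakonOperator f1 h1 f0 h0 u t x
    ∧ pt (fun t' x' => u t' x' ^ 2 + px u t' x' ^ 2) t x
        + px (fun t' x' => 2 * u t' x' * transportFlux f1 h1 f0 h0 u t' x'
            - 2 * u t' x' * pt (px u) t' x'
            - H1 (u t' x' ^ 2 - px u t' x' ^ 2)
            - h0 * log ((u t' x' - px u t' x') / (u t' x' + px u t' x'))
            - 2 * h0 * x') t x
      = 2 * u t x * multiPeakonOperator f1 h1 f0 h0 u t x := by
  have hA : u t x ^ 2 - px u t x ^ 2 ≠ 0 := (sub_pos.mpr (sq_lt_sq.mpr hlt)).ne'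
  have hpx : ContDiffAt ℝ 2 (Function.uncurry (px u)) (t, x) :=
    contDiffAt_uncurry_px (by norm_num [hu])
  have hv := hasDerivAt_px (hu.differentiableAt three_ne_zero)
  have hp := hasDerivAt_px (hpx.differentiableAt two_ne_zero)
  have hflux : HasDerivAt _ (px (transportFlux f1 h1 f0 h0 u) t x) x :=
    (differentiableAt_transportFlux f0 h0 hf1 hh1 hu hux hA).hasDerivAt
  constructor
  · have hmomentum := (hflux.fun_add (hasDerivAt_momentumPotential f0 hF1 hv hp hA)).deriv
    simp only [← add_assoc] at hmomentum
    rw [px, hmomentum, multiPeakonOperator, mf]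
    ring
  · have henergy := ((((hv.const_mul 2).fun_mul hflux).fun_sub
      (hasDerivAt_two_mul_mul_pt_px hu)).fun_sub
      (hasDerivAt_energyPotential f1 f0 h0 hH1 hv hp hux hA)).deriv
    simp only [← sub_sub] at henergy
    rw [px, henergy, multiPeakonOperator, transportFlux, mf]
    ring

end ConservationLaws

theorem hasDerivAt_of_eq_integral {f F : ℝ → ℝ} {a : ℝ} (hf : Continuous f)
    (hF : ∀ y, F y = ∫ s in a..y, f s) (y : ℝ) : HasDerivAt F (f y) y :=
  funext hF ▸ (hf.integral_hasStrictDerivAt a y).hasDerivAt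

/-- simultaneous conservation of momentum and the H¹ density. -/
theorem momentum_and_H1_conservation
    (f1 h1 : ℝ → ℝ) (hf1 : ContDiff ℝ (⊤ : ℕ∞) f1) (hh1 : ContDiff ℝ (⊤ : ℕ∞) h1)
    (F1 H1 : ℝ → ℝ)
    (hF1 : ∀ y : ℝ, F1 y = ∫ s in (0:ℝ)..y, f1 s)
    (hH1 : ∀ y : ℝ, H1 y = ∫ s in (0:ℝ)..y, h1 s)
    (f0 h0 : ℝ)
    (u : ℝ → ℝ → ℝ) (hu : ContDiff ℝ (⊤ : ℕ∞) (Function.uncurry u))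
    (hpos : ∀ t x : ℝ, u t x > |px u t x| ∧ |px u t x| > 0)
    (heq : ∀ t x : ℝ,
      pt (mf u) t x
        + (px u t x * f1 ((u t x)^2 - (px u t x)^2)
            + f0 * u t x / ((u t x)^2 - (px u t x)^2)) * mf u t x
        + px (fun t' x' =>
            (u t' x' * f1 ((u t' x')^2 - (px u t' x')^2)
              + h1 ((u t' x')^2 - (px u t' x')^2)
              + (f0 * (u t' x')^2 + h0 * u t' x')
                  / (px u t' x' * ((u t' x')^2 - (px u t' x')^2))) * mf u t' x') t x
        = 0) :
    (∀ t x : ℝ,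
      pt (mf u) t x
        + px (fun t' x' =>
            (u t' x' * f1 ((u t' x')^2 - (px u t' x')^2)
              + h1 ((u t' x')^2 - (px u t' x')^2)
              + (f0 * (u t' x')^2 + h0 * u t' x')
                  / (px u t' x' * ((u t' x')^2 - (px u t' x')^2))) * mf u t' x'
              + (1/2) * F1 ((u t' x')^2 - (px u t' x')^2)
              + (1/2) * f0 * Real.log ((u t' x' - px u t' x') / (u t' x' + px u t' x'))
              + f0 * x') t x = 0)
    ∧
    (∀ t x : ℝ,
      pt (fun t' x' => (u t' x')^2 + (px u t' x')^2) t x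
        + px (fun t' x' =>
            2 * u t' x'
              * ((u t' x' * f1 ((u t' x')^2 - (px u t' x')^2)
                  + h1 ((u t' x')^2 - (px u t' x')^2)
                  + (f0 * (u t' x')^2 + h0 * u t' x')
                      / (px u t' x' * ((u t' x')^2 - (px u t' x')^2))) * mf u t' x')
              - 2 * u t' x' * pt (px u) t' x'
              - H1 ((u t' x')^2 - (px u t' x')^2)
              - h0 * Real.log ((u t' x' - px u t' x') / (u t' x' + px u t' x'))
              - 2 * h0 * x') t x = 0) := by
  have identities (t x : ℝ) := momentum_and_H1_conservation_general f0 h0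
    (hf1.differentiable (by simp)).differentiableAt (hh1.differentiable (by simp)).differentiableAt
    (hasDerivAt_of_eq_integral hf1.continuous hF1 _)
    (hasDerivAt_of_eq_integral hh1.continuous hH1 _)
    (hu.contDiffAt.of_le (WithTop.coe_le_coe.mpr le_top)) (abs_pos.mp (hpos t x).2)
    ((hpos t x).1.trans_le (le_abs_self _))
  exact ⟨fun t x => (identities t x).1.trans (heq t x),
    fun t x => (identities t x).2.trans (mul_eq_zero_of_right _ (heq t x))⟩

end
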